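/- arXiv:1006.3501 — 4 statements merged into one kernel-verified Lean document; each statement's English description precedes it below -/
import Mathlib

section
/- Let C be a spherical fusion category over a commutative ring k with representative set I of simple objects, and suppose dim(C) is invertible in k. For half braidings (A,σ) and (B,ρ) of C, define the k-linear endomorphism π of Hom_C(A,B) by π(f) = dim(C)^{-1} · Σ_{i∈I} dim(i) · (ev_l(i) ⊗ id_B)(id_{i*} ⊗ ρ_i)(id_{i*} ⊗ f ⊗ id_i)(σ_{i*} ⊗ id_i)(id_A ⊗ coev_r(i)). Then π is an idempotent (π∘π = π) whose image is exactly Hom_{Z(C)}((A,σ),(B,ρ)) = { f ∈ Hom_C(A,B) : (id_X ⊗ f)σ_X = ρ_X(f ⊗ id_X) for all objects X of C }. -/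
open CategoryTheory CategoryTheory.Limits MonoidalCategory

universe v u w

/-- A pivotal category: a monoidal category in which every object is equipped with a dual
object and with evaluation/coevaluation morphisms forming a left duality and a right
duality, such that left and right duals of morphisms coincide, the left and right
monoidal constraints coincide, and the left and right evaluations of the unit coincide. -/
class PivotalCat (C : Type u) [Category.{v} C] [MonoidalCategory C] where
  dual : C → C
  evl : ∀ X : C, dual X ⊗ X ⟶ 𝟙_ C
  coevl : ∀ X : C, 𝟙_ C ⟶ X ⊗ dual X
  evr : ∀ X : C, X ⊗ dual X ⟶ 𝟙_ C
  coevr : ∀ X : C, 𝟙_ C ⟶ dual X ⊗ X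
  left_zigzag₁ : ∀ X : C,
    (λ_ X).inv ≫ (coevl X ▷ X) ≫ (α_ X (dual X) X).hom ≫ (X ◁ evl X) ≫ (ρ_ X).hom = 𝟙 X
  left_zigzag₂ : ∀ X : C,
    (ρ_ (dual X)).inv ≫ (dual X ◁ coevl X) ≫ (α_ (dual X) X (dual X)).inv ≫
      (evl X ▷ dual X) ≫ (λ_ (dual X)).hom = 𝟙 (dual X)
  right_zigzag₁ : ∀ X : C,
    (ρ_ X).inv ≫ (X ◁ coevr X) ≫ (α_ X (dual X) X).inv ≫ (evr X ▷ X) ≫ (λ_ X).hom = 𝟙 X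
  right_zigzag₂ : ∀ X : C,
    (λ_ (dual X)).inv ≫ (coevr X ▷ dual X) ≫ (α_ (dual X) X (dual X)).hom ≫
      (dual X ◁ evr X) ≫ (ρ_ (dual X)).hom = 𝟙 (dual X)
  ldual_eq_rdual : ∀ {X Y : C} (f : X ⟶ Y),
    (ρ_ (dual Y)).inv ≫ (dual Y ◁ coevl X) ≫ (dual Y ◁ (f ▷ dual X)) ≫
      (α_ (dual Y) Y (dual X)).inv ≫ (evl Y ▷ dual X) ≫ (λ_ (dual X)).hom =
    (λ_ (dual Y)).inv ≫ (coevr X ▷ dual Y) ≫ ((dual X ◁ f) ▷ dual Y) ≫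
      (α_ (dual X) Y (dual Y)).hom ≫ (dual X ◁ evr Y) ≫ (ρ_ (dual X)).hom
  constraint_eq : ∀ X Y : C,
    (ρ_ (dual X ⊗ dual Y)).inv ≫ ((dual X ⊗ dual Y) ◁ coevl (Y ⊗ X)) ≫
      (α_ (dual X) (dual Y) ((Y ⊗ X) ⊗ dual (Y ⊗ X))).hom ≫
      (dual X ◁ (α_ (dual Y) (Y ⊗ X) (dual (Y ⊗ X))).inv) ≫
      (dual X ◁ (((α_ (dual Y) Y X).inv ≫ (evl Y ▷ X) ≫ (λ_ X).hom) ▷ dual (Y ⊗ X))) ≫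
      (α_ (dual X) X (dual (Y ⊗ X))).inv ≫ (evl X ▷ dual (Y ⊗ X)) ≫ (λ_ (dual (Y ⊗ X))).hom =
    (λ_ (dual X ⊗ dual Y)).inv ≫ (coevr (Y ⊗ X) ▷ (dual X ⊗ dual Y)) ≫
      (α_ (dual (Y ⊗ X)) (Y ⊗ X) (dual X ⊗ dual Y)).hom ≫
      (dual (Y ⊗ X) ◁ ((α_ Y X (dual X ⊗ dual Y)).hom ≫ (Y ◁ (α_ X (dual X) (dual Y)).inv) ≫
        (Y ◁ (evr X ▷ dual Y)) ≫ (Y ◁ (λ_ (dual Y)).hom) ≫ evr Y)) ≫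
      (ρ_ (dual (Y ⊗ X))).hom
  ev_unit : (ρ_ (dual (𝟙_ C))).inv ≫ evl (𝟙_ C) = (λ_ (dual (𝟙_ C))).inv ≫ evr (𝟙_ C)

namespace PivotalCat

variable {C : Type u} [Category.{v} C] [MonoidalCategory C] [PivotalCat C]

/-- The (common left = right) dual of a morphism. -/
def pdual {X Y : C} (f : X ⟶ Y) : dual Y ⟶ dual X :=
  (ρ_ (dual Y)).inv ≫ (dual Y ◁ coevl X) ≫ (dual Y ◁ (f ▷ dual X)) ≫
    (α_ (dual Y) Y (dual X)).inv ≫ (evl Y ▷ dual X) ≫ (λ_ (dual X)).hom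

/-- The (common left = right) pivotal monoidal constraint `X* ⊗ Y* ⟶ (Y ⊗ X)*`. -/
def mcon (X Y : C) : dual X ⊗ dual Y ⟶ dual (Y ⊗ X) :=
  (ρ_ (dual X ⊗ dual Y)).inv ≫ ((dual X ⊗ dual Y) ◁ coevl (Y ⊗ X)) ≫
    (α_ (dual X) (dual Y) ((Y ⊗ X) ⊗ dual (Y ⊗ X))).hom ≫
    (dual X ◁ (α_ (dual Y) (Y ⊗ X) (dual (Y ⊗ X))).inv) ≫
    (dual X ◁ (((α_ (dual Y) Y X).inv ≫ (evl Y ▷ X) ≫ (λ_ X).hom) ▷ dual (Y ⊗ X))) ≫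
    (α_ (dual X) X (dual (Y ⊗ X))).inv ≫ (evl X ▷ dual (Y ⊗ X)) ≫ (λ_ (dual (Y ⊗ X))).hom

/-- The left trace of an endomorphism. -/
def trl {X : C} (f : X ⟶ X) : 𝟙_ C ⟶ 𝟙_ C := coevr X ≫ (dual X ◁ f) ≫ evl X

/-- The right trace of an endomorphism. -/
def trr {X : C} (f : X ⟶ X) : 𝟙_ C ⟶ 𝟙_ C := coevl X ≫ (f ▷ dual X) ≫ evr X

/-- The left dimension of an object, as an endomorphism of the unit. -/
def diml (X : C) : 𝟙_ C ⟶ 𝟙_ C := trl (𝟙 X)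

/-- The right dimension of an object, as an endomorphism of the unit. -/
def dimr (X : C) : 𝟙_ C ⟶ 𝟙_ C := trr (𝟙 X)

/-- The permutation map `σ_{X,Y} : Hom(𝟙, X ⊗ Y) → Hom(𝟙, Y ⊗ X)`,
`α ↦ (ev_l X ⊗ id_{Y⊗X}) ∘ (id_{X*} ⊗ α ⊗ id_X) ∘ coev_r X`. -/
def sigmaMap (X Y : C) (a : 𝟙_ C ⟶ X ⊗ Y) : 𝟙_ C ⟶ Y ⊗ X :=
  coevr X ≫ (dual X ◁ (λ_ X).inv) ≫ (dual X ◁ (a ▷ X)) ≫ (dual X ◁ (α_ X Y X).hom) ≫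
    (α_ (dual X) X (Y ⊗ X)).inv ≫ (evl X ▷ (Y ⊗ X)) ≫ (λ_ (Y ⊗ X)).hom

end PivotalCat

/-- A pivotal category is spherical when left and right traces coincide. -/
class SphericalCat (C : Type u) [Category.{v} C] [MonoidalCategory C] [PivotalCat C] : Prop where
  tr_eq : ∀ {X : C} (f : X ⟶ X), PivotalCat.trl f = PivotalCat.trr f
/-- An object `X` of a `k`-linear category is simple if `λ ↦ λ • id_X` is a bijection
`k → End X`. -/
def IsSimpleObj (k : Type w) [CommRing k] {C : Type u} [Category.{v} C]
    [Preadditive C] [CategoryTheory.Linear k C] (X : C) : Prop :=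
  Function.Bijective fun a : k => a • 𝟙 X

/-- A monoidal `k`-category: the hom-sets are `k`-modules, composition and the monoidal
product are `k`-bilinear (all this is encoded in the instance parameters), and
`End(𝟙)` is free of rank one via `λ ↦ λ • id`. -/
class MonoidalKCat (k : Type w) [CommRing k] (C : Type u) [Category.{v} C]
    [Preadditive C] [CategoryTheory.Linear k C] [MonoidalCategory C]
    [MonoidalPreadditive C] [CategoryTheory.MonoidalLinear k C] : Prop where
  unit_free : Function.Bijective fun a : k => a • 𝟙 (𝟙_ C)

/-- The identification `End(𝟙) = k` of a monoidal `k`-category. -/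
noncomputable def toScalar (k : Type w) [CommRing k] {C : Type u} [Category.{v} C]
    [Preadditive C] [CategoryTheory.Linear k C] [MonoidalCategory C]
    [MonoidalPreadditive C] [CategoryTheory.MonoidalLinear k C] [MonoidalKCat k C]
    (f : 𝟙_ C ⟶ 𝟙_ C) : k :=
  (Equiv.ofBijective (fun a : k => a • 𝟙 (𝟙_ C))
    (MonoidalKCat.unit_free (k := k) (C := C))).symm f

/-- The left dimension of an object as an element of `k`. -/
noncomputable def sdiml (k : Type w) [CommRing k] {C : Type u} [Category.{v} C]
    [Preadditive C] [CategoryTheory.Linear k C] [MonoidalCategory C]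
    [MonoidalPreadditive C] [CategoryTheory.MonoidalLinear k C] [PivotalCat C]
    [MonoidalKCat k C] (X : C) : k :=
  toScalar k (PivotalCat.diml X)

/-- The right dimension of an object as an element of `k`. -/
noncomputable def sdimr (k : Type w) [CommRing k] {C : Type u} [Category.{v} C]
    [Preadditive C] [CategoryTheory.Linear k C] [MonoidalCategory C]
    [MonoidalPreadditive C] [CategoryTheory.MonoidalLinear k C] [PivotalCat C]
    [MonoidalKCat k C] (X : C) : k :=
  toScalar k (PivotalCat.dimr X)

/-- A pre-fusion category over `k`: a pivotal `k`-category in which every finite family of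
objects has a direct sum, every object is a finite direct sum of simple objects, and there
are no nonzero morphisms between non-isomorphic simple objects. -/
class PreFusionCat (k : Type w) [CommRing k] (C : Type u) [Category.{v} C]
    [Preadditive C] [CategoryTheory.Linear k C] [MonoidalCategory C]
    [MonoidalPreadditive C] [CategoryTheory.MonoidalLinear k C]
    [CategoryTheory.Limits.HasFiniteBiproducts C] [PivotalCat C] [MonoidalKCat k C] : Prop where
  semisimple : ∀ X : C, ∃ (n : ℕ) (obj : Fin n → C) (p : ∀ a, X ⟶ obj a) (q : ∀ a, obj a ⟶ X),
    (∀ a, IsSimpleObj k (obj a)) ∧ (∑ a, p a ≫ q a = 𝟙 X) ∧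
    (∀ a, q a ≫ p a = 𝟙 (obj a)) ∧ (∀ a b, a ≠ b → q a ≫ p b = 0)
  simple_hom_zero : ∀ {i j : C}, IsSimpleObj k i → IsSimpleObj k j →
    IsEmpty (i ≅ j) → ∀ f : i ⟶ j, f = 0

/-- A fusion category over `k`: a pre-fusion category with finitely many isomorphism
classes of simple objects. -/
class FusionCat (k : Type w) [CommRing k] (C : Type u) [Category.{v} C]
    [Preadditive C] [CategoryTheory.Linear k C] [MonoidalCategory C]
    [MonoidalPreadditive C] [CategoryTheory.MonoidalLinear k C]
    [CategoryTheory.Limits.HasFiniteBiproducts C] [PivotalCat C] [MonoidalKCat k C]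
    [PreFusionCat k C] : Prop where
  finitely_many_simples : ∃ S : Set C, S.Finite ∧
    ∀ i : C, IsSimpleObj k i → ∃ j ∈ S, Nonempty (i ≅ j)

/-- A representative set of simple objects: it contains the unit object, consists of simple
objects, and every simple object is isomorphic to exactly one of its elements. -/
def IsRepresentativeSet (k : Type w) [CommRing k] (C : Type u) [Category.{v} C]
    [Preadditive C] [CategoryTheory.Linear k C] [MonoidalCategory C] (I : Set C) : Prop :=
  (𝟙_ C) ∈ I ∧ (∀ i ∈ I, IsSimpleObj k i) ∧
    ∀ X : C, IsSimpleObj k X → ∃! i, i ∈ I ∧ Nonempty (X ≅ i)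

/-- The dimension of a fusion category with (finite) representative set `I` of simple
objects: `dim C = ∑_{i ∈ I} dim_l(i) · dim_r(i)`. -/
noncomputable def catDim (k : Type w) [CommRing k] {C : Type u} [Category.{v} C]
    [Preadditive C] [CategoryTheory.Linear k C] [MonoidalCategory C]
    [MonoidalPreadditive C] [CategoryTheory.MonoidalLinear k C] [PivotalCat C]
    [MonoidalKCat k C] (I : Finset C) : k :=
  ∑ i ∈ I, sdiml k i * sdimr k i

open PivotalCat in
/-- The averaging operator `π` on `Hom_C(A, B)` associated with half braidings `σ` of `A`
and `τ` of `B`: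
`π(f) = dim(C)⁻¹ · ∑_{i ∈ I} dim(i) · (ev_l i ⊗ id_B)(id_{i*} ⊗ τ_i)(id_{i*} ⊗ f ⊗ id_i)(σ_{i*} ⊗ id_i)(id_A ⊗ coev_r i)`. -/
noncomputable def piMap (k : Type w) [CommRing k] {C : Type u} [Category.{v} C]
    [Preadditive C] [CategoryTheory.Linear k C] [MonoidalCategory C]
    [MonoidalPreadditive C] [CategoryTheory.MonoidalLinear k C] [PivotalCat C]
    [MonoidalKCat k C] (I : Finset C) {A B : C}
    (σ : HalfBraiding A) (τ : HalfBraiding B) (f : A ⟶ B) : A ⟶ B :=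
  Ring.inverse (catDim k I) •
    ∑ i ∈ I, sdiml k i •
      ((ρ_ A).inv ≫ (A ◁ coevr i) ≫ (α_ A (dual i) i).inv ≫
        ((σ.β (dual i)).hom ▷ i) ≫ ((dual i ◁ f) ▷ i) ≫ (α_ (dual i) B i).hom ≫
        (dual i ◁ (τ.β i).hom) ≫ (α_ (dual i) i B).inv ≫ (evl i ▷ B) ≫ (λ_ B).hom)

/-!
Write `E_i(f) : A ⟶ B` for `f` encircled by a loop coloured by the simple object `i`, so that `π(f)`
is `dim(C)⁻¹ ∑ dim(i) E_i(f)`. If `f` is a morphism of the center, it slides out of the loop and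
`E_i(f) = dim(i) f`, hence `π(f) = f`.

Conversely `π(f)` is a morphism of the center. Decompose `X ⊗ i*` into simple objects `j*` to write
`(id_X ⊗ E_i(f)) σ_X` as a sum over `j` of terms in which `f` threads between two strands `j*` and
`i`, fed by elements of `Hom(X, j* ⊗ i) ⊗ Hom(j* ⊗ i, X)`. Decomposing `j ⊗ X` into simple objects
`i` does the same for `τ_X (E_j(f) ⊗ id_X)`. The two elements come from families that are dual for
the trace pairing up to the factors `dim(j)` and `dim(i)` respectively, so after multiplication by
`dim(i)` and `dim(j)` they agree.
-/

open scoped TensorProduct in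
theorem smul_sum_tmul_eq_smul_sum_tmul_of_dual {k U V a b : Type*} [CommSemiring k]
    [AddCommMonoid U] [Module k U] [AddCommMonoid V] [Module k V]
    [Fintype a] [DecidableEq a] [Fintype b] [DecidableEq b]
    (G : U →ₗ[k] V →ₗ[k] k) {c d : k} {u : a → U} {v : a → V} {u' : b → U} {v' : b → V}
    (huv : ∀ x y, G (u x) (v y) = if y = x then c else 0)
    (huv' : ∀ x y, G (u' x) (v' y) = if y = x then d else 0)
    (hu' : Submodule.span k (Set.range u') = ⊤) (hv : Submodule.span k (Set.range v) = ⊤) :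
    d • ∑ x, u x ⊗ₜ[k] v x = c • ∑ y, u' y ⊗ₜ[k] v' y := by
  have expand_u (x : a) : ∃ m : b → k, ∑ y, m y • u' y = u x :=
    Submodule.mem_span_range_iff_exists_fun k |>.1 (hu' ▸ Submodule.mem_top)
  have expand_v' (y : b) : ∃ n : a → k, ∑ x, n x • v x = v' y :=
    Submodule.mem_span_range_iff_exists_fun k |>.1 (hv ▸ Submodule.mem_top)
  choose m hm using expand_u
  choose n hn using expand_v'
  have coeff_eq (x : a) (y : b) : d * m x y = c * n y x :=
    calc d * m x y = G (u x) (v' y) := by simp [← hm, huv', mul_comm]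
      _ = c * n y x := by simp [← hn, huv, mul_comm]
  calc d • ∑ x, u x ⊗ₜ[k] v x
      = ∑ x, ∑ y, (d * m x y) • u' y ⊗ₜ[k] v x := by
        simp only [← hm, TensorProduct.sum_tmul, Finset.smul_sum, ← TensorProduct.smul_tmul',
          smul_smul]
    _ = ∑ y, ∑ x, (c * n y x) • u' y ⊗ₜ[k] v x := by
        rw [Finset.sum_comm]
        simp only [coeff_eq]
    _ = c • ∑ y, u' y ⊗ₜ[k] v' y := by
        simp only [← hn, TensorProduct.tmul_sum, Finset.smul_sum, TensorProduct.tmul_smul,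
          smul_smul]

namespace PivotalCat

/-! ### Duality -/

section Duality

variable {C : Type u} [Category.{v} C] [MonoidalCategory C] [PivotalCat C]

/-- The left duality; in Mathlib's convention `dual X` is here the right dual of `X`. -/
instance leftExactPairing (X : C) : ExactPairing X (dual X) where
  coevaluation' := coevl X
  evaluation' := evl X
  coevaluation_evaluation' := by
    rw [Iso.eq_comp_inv, ← Iso.inv_comp_eq_id]
    simpa using left_zigzag₂ X
  evaluation_coevaluation' := by
    rw [Iso.eq_comp_inv, ← Iso.inv_comp_eq_id]
    simpa using left_zigzag₁ X

/-- The right duality; in Mathlib's convention `dual X` is here the left dual of `X`. -/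
instance rightExactPairing (X : C) : ExactPairing (dual X) X where
  coevaluation' := coevr X
  evaluation' := evr X
  coevaluation_evaluation' := by
    rw [Iso.eq_comp_inv, ← Iso.inv_comp_eq_id]
    simpa using right_zigzag₁ X
  evaluation_coevaluation' := by
    rw [Iso.eq_comp_inv, ← Iso.inv_comp_eq_id]
    simpa using right_zigzag₂ X

theorem nonempty_iso_of_dual_iso_dual {X Y : C} (e : dual X ≅ dual Y) : Nonempty (X ≅ Y) :=
  ⟨leftDualIso (leftExactPairing X) (exactPairingCongrRight e)⟩

theorem nonempty_iso_dual_of_dual_iso {X Y : C} (e : dual X ≅ Y) : Nonempty (X ≅ dual Y) :=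
  ⟨rightDualIso (rightExactPairing X) (exactPairingCongrLeft e)⟩

/-- The partial trace over the left tensor factor, for a factor which is presented as a dual. -/
def leftPartialTrace {Y Z W : C} (h : dual Y ⊗ Z ⟶ dual Y ⊗ W) : Z ⟶ W :=
  (λ_ Z).inv ≫ coevl Y ▷ Z ≫ (α_ Y (dual Y) Z).hom ≫ Y ◁ h ≫ (α_ Y (dual Y) W).inv ≫
    evr Y ▷ W ≫ (λ_ W).hom

/-- The partial trace over the right tensor factor. -/
def rightPartialTrace {Y Z W : C} (h : Z ⊗ Y ⟶ W ⊗ Y) : Z ⟶ W :=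
  (ρ_ Z).inv ≫ Z ◁ coevl Y ≫ (α_ Z Y (dual Y)).inv ≫ h ▷ dual Y ≫ (α_ W Y (dual Y)).hom ≫
    W ◁ evr Y ≫ (ρ_ W).hom

theorem trr_leftPartialTrace {Y Z : C} (h : dual Y ⊗ Z ⟶ dual Y ⊗ Z) :
    trr (leftPartialTrace h) = coevl Y ≫ Y ◁ rightPartialTrace h ≫ evr Y := by
  simp only [trr, leftPartialTrace, rightPartialTrace]
  calc
    _ = 𝟙 _ ⊗≫ (𝟙_ C ◁ coevl Z ≫ coevl Y ▷ (Z ⊗ dual Z)) ⊗≫ Y ◁ h ▷ dual Z ⊗≫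
        (evr Y ▷ (Z ⊗ dual Z) ≫ 𝟙_ C ◁ evr Z) ⊗≫ 𝟙 _ := by monoidal
    _ = 𝟙 _ ⊗≫ (coevl Y ▷ 𝟙_ C ≫ (Y ⊗ dual Y) ◁ coevl Z) ⊗≫ Y ◁ h ▷ dual Z ⊗≫
        ((Y ⊗ dual Y) ◁ evr Z ≫ evr Y ▷ 𝟙_ C) ⊗≫ 𝟙 _ := by
      rw [whisker_exchange, whisker_exchange]
    _ = _ := by monoidal

theorem leftPartialTrace_comp {X Y Z W : C} (v : dual Y ⊗ Z ⟶ X) (u : X ⟶ dual Y ⊗ W) :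
    leftPartialTrace (v ≫ u) =
      tensorLeftHomEquiv Z Y (dual Y) X v ≫ (tensorLeftHomEquiv X (dual Y) Y W).symm u := by
  simp only [leftPartialTrace, whiskerLeft_comp, Category.assoc, tensorLeftHomEquiv,
    Equiv.coe_fn_mk, Equiv.coe_fn_symm_mk]
  rfl

theorem rightPartialTrace_comp {X Y Z W : C} (v : Z ⊗ Y ⟶ X) (u : X ⟶ W ⊗ Y) :
    rightPartialTrace (v ≫ u) =
      tensorRightHomEquiv Z Y (dual Y) X v ≫ (tensorRightHomEquiv X (dual Y) Y W).symm u := by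
  simp only [rightPartialTrace, comp_whiskerRight, Category.assoc, tensorRightHomEquiv,
    Equiv.coe_fn_mk, Equiv.coe_fn_symm_mk]
  rfl

end Duality

/-! ### Linear duality -/

section LinearDuality

variable (k : Type w) [CommRing k] {C : Type u} [Category.{v} C] [Preadditive C]
  [CategoryTheory.Linear k C] [MonoidalCategory C] [MonoidalPreadditive C]
  [CategoryTheory.MonoidalLinear k C]

/-- `tensorLeftHomEquiv` as a linear equivalence. -/
def tensorLeftHomLinearEquiv (X Y Y' Z : C) [ExactPairing Y Y'] :
    (Y' ⊗ X ⟶ Z) ≃ₗ[k] (X ⟶ Y ⊗ Z) where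
  __ := tensorLeftHomEquiv X Y Y' Z
  map_add' f g := by simp [tensorLeftHomEquiv]
  map_smul' c f := by simp [tensorLeftHomEquiv]

/-- `tensorRightHomEquiv` as a linear equivalence. -/
def tensorRightHomLinearEquiv (X Y Y' Z : C) [ExactPairing Y Y'] :
    (X ⊗ Y ⟶ Z) ≃ₗ[k] (X ⟶ Z ⊗ Y') where
  __ := tensorRightHomEquiv X Y Y' Z
  map_add' f g := by simp [tensorRightHomEquiv]
  map_smul' c f := by simp [tensorRightHomEquiv]

theorem toScalar_smul_id [MonoidalKCat k C] (f : 𝟙_ C ⟶ 𝟙_ C) : toScalar k f • 𝟙 (𝟙_ C) = f :=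
  (Equiv.ofBijective (fun a : k => a • 𝟙 (𝟙_ C)) MonoidalKCat.unit_free).apply_symm_apply f

/-- The identification `toScalar` of `End(𝟙)` with `k`, as a linear map. -/
noncomputable def toScalarLinearMap [MonoidalKCat k C] : (𝟙_ C ⟶ 𝟙_ C) →ₗ[k] k where
  toFun := toScalar k
  map_add' f g := (MonoidalKCat.unit_free (C := C)).1 <| by simp [toScalar_smul_id, add_smul]
  map_smul' c f := (MonoidalKCat.unit_free (C := C)).1 <| by simp [toScalar_smul_id, mul_smul]

variable [PivotalCat C]

/-- The pairing `(u, v) ↦ tr(v ≫ u)`, where the two strands `Y*` and `Z` of `v ≫ u` are closed up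
on the left and on the right respectively. -/
noncomputable def tracePairing [MonoidalKCat k C] (X Y Z : C) :
    (X ⟶ dual Y ⊗ Z) →ₗ[k] (dual Y ⊗ Z ⟶ X) →ₗ[k] k :=
  LinearMap.mk₂ k (fun u v => toScalarLinearMap k (trr (leftPartialTrace (v ≫ u))))
    (by simp [trr, leftPartialTrace]) (by simp [trr, leftPartialTrace])
    (by simp [trr, leftPartialTrace]) (by simp [trr, leftPartialTrace])

theorem tracePairing_tensorLeft [MonoidalKCat k C] {X Y Z : C} (p : Y ⊗ X ⟶ Z) (q : Z ⟶ Y ⊗ X) :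
    tracePairing k X Y Z (tensorLeftHomLinearEquiv k X (dual Y) Y Z p)
      ((tensorLeftHomLinearEquiv k Z Y (dual Y) X).symm q) =
      toScalarLinearMap k (trr (q ≫ p)) := by
  change toScalarLinearMap k (trr (leftPartialTrace
    ((tensorLeftHomEquiv Z Y (dual Y) X).symm q ≫ tensorLeftHomEquiv X (dual Y) Y Z p))) = _
  rw [leftPartialTrace_comp, Equiv.apply_symm_apply, Equiv.symm_apply_apply]

theorem tracePairing_tensorRight [MonoidalKCat k C] {X Y Z : C} (p : X ⊗ dual Z ⟶ dual Y)
    (q : dual Y ⟶ X ⊗ dual Z) :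
    tracePairing k X Y Z (tensorRightHomLinearEquiv k X (dual Z) Z (dual Y) p)
      ((tensorRightHomLinearEquiv k (dual Y) Z (dual Z) X).symm q) =
      toScalarLinearMap k (coevl Y ≫ Y ◁ (q ≫ p) ≫ evr Y) := by
  change toScalarLinearMap k (trr (leftPartialTrace
    ((tensorRightHomEquiv (dual Y) Z (dual Z) X).symm q ≫
      tensorRightHomEquiv X (dual Z) Z (dual Y) p))) = _
  rw [trr_leftPartialTrace, rightPartialTrace_comp, Equiv.apply_symm_apply,
    Equiv.symm_apply_apply]

variable {k} in
theorem isSimpleObj_dual {X : C} (hX : IsSimpleObj k X) : IsSimpleObj k (dual X) := by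
  let el := tensorLeftHomLinearEquiv k X X (dual X) (𝟙_ C)
  let er := tensorRightHomLinearEquiv k (dual X) X (dual X) (𝟙_ C)
  have el_evl : el (evl X) = (ρ_ X).inv := by
    let : HasLeftDual (dual X) := ⟨X⟩
    have h := tensorLeftHomEquiv_whiskerLeft_comp_evaluation (Z := dual X) (𝟙 X)
    rwa [whiskerLeft_id, Category.id_comp, Category.id_comp] at h
  have er_evl : er (evl X) = (λ_ (dual X)).inv := by
    let : HasRightDual X := ⟨dual X⟩
    have h := tensorRightHomEquiv_whiskerRight_comp_evaluation (X := X) (𝟙 (dual X))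
    rwa [id_whiskerRight, Category.id_comp, Category.id_comp] at h
  let e := Linear.homCongr k (Iso.refl X) (ρ_ X).symm ≪≫ₗ el.symm ≪≫ₗ er ≪≫ₗ
    Linear.homCongr k (Iso.refl (dual X)) (λ_ (dual X))
  have e_id : e (𝟙 X) = 𝟙 (dual X) := by
    simp [e, Linear.homCongr, ← el_evl, er_evl]
  have smul_id_eq : (fun a : k => a • 𝟙 (dual X)) = e ∘ fun a : k => a • 𝟙 X := by
    ext a
    simp [e_id]
  rw [IsSimpleObj, smul_id_eq]
  exact e.bijective.comp hX

end LinearDuality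

/-! ### Decomposition along a family of simple objects -/

section Decomposition

variable {k : Type w} [CommRing k] {C : Type u} [Category.{v} C] [Preadditive C]
  [CategoryTheory.Linear k C] {ι : Type*}

variable (k) in
/-- A family of simple objects meeting each isomorphism class of simple objects exactly once. It is
indexed by a type, so that the duals of such a family form another one with the same index type. -/
structure IsSimpleFamily (F : ι → C) : Prop where
  isSimpleObj : ∀ i, IsSimpleObj k (F i)
  eq_of_iso : ∀ {i j}, Nonempty (F i ≅ F j) → i = j
  exists_iso : ∀ X : C, IsSimpleObj k X → ∃ i, Nonempty (X ≅ F i)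

/-- A decomposition of `Y` as a direct sum of members of the family `F`, in which `Copy i` indexes
the summands `F i`. The vanishing of `incl i a ≫ proj j b` for `i ≠ j` is not recorded: it is
automatic for the families of non-isomorphic simple objects to which this is applied. -/
structure IsotypicDecomposition [Fintype ι] (F : ι → C) (Y : C) where
  Copy : ι → Type
  [fintypeCopy : ∀ i, Fintype (Copy i)]
  [decidableEqCopy : ∀ i, DecidableEq (Copy i)]
  proj : ∀ i, Copy i → (Y ⟶ F i)
  incl : ∀ i, Copy i → (F i ⟶ Y)
  sum_proj_comp_incl : ∑ i, ∑ a, proj i a ≫ incl i a = 𝟙 Y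
  incl_comp_proj : ∀ i a b, incl i a ≫ proj i b = if a = b then 𝟙 (F i) else 0

attribute [instance] IsotypicDecomposition.fintypeCopy IsotypicDecomposition.decidableEqCopy

variable [MonoidalCategory C]

theorem IsSimpleFamily.of_isRepresentativeSet {I : Set C} (hI : IsRepresentativeSet k C I) :
    IsSimpleFamily k (Subtype.val : I → C) where
  isSimpleObj i := hI.2.1 i i.2
  eq_of_iso {i j} e := Subtype.ext <|
    (hI.2.2 i (hI.2.1 i i.2)).unique ⟨i.2, ⟨Iso.refl _⟩⟩ ⟨j.2, e⟩
  exists_iso X hX :=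
    have ⟨i, ⟨hi, e⟩, _⟩ := hI.2.2 X hX
    ⟨⟨i, hi⟩, e⟩

variable [MonoidalPreadditive C] [CategoryTheory.MonoidalLinear k C] [PivotalCat C]

theorem IsSimpleFamily.dual {F : ι → C} (hF : IsSimpleFamily k F) :
    IsSimpleFamily k fun i => dual (F i) where
  isSimpleObj i := isSimpleObj_dual (hF.isSimpleObj i)
  eq_of_iso := fun ⟨e⟩ => hF.eq_of_iso (nonempty_iso_of_dual_iso_dual e)
  exists_iso _ hX :=
    have ⟨i, ⟨e⟩⟩ := hF.exists_iso _ (isSimpleObj_dual hX)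
    ⟨i, nonempty_iso_dual_of_dual_iso e⟩

variable [HasFiniteBiproducts C] [MonoidalKCat k C] [PreFusionCat k C]

theorem IsSimpleFamily.hom_eq_zero {F : ι → C} (hF : IsSimpleFamily k F) {i j : ι} (hij : i ≠ j)
    (f : F i ⟶ F j) : f = 0 :=
  PreFusionCat.simple_hom_zero (hF.isSimpleObj i) (hF.isSimpleObj j)
    ⟨fun e => hij (hF.eq_of_iso ⟨e⟩)⟩ f

variable [Fintype ι] {F : ι → C}

theorem IsSimpleFamily.nonempty_isotypicDecomposition (hF : IsSimpleFamily k F) (Y : C) :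
    Nonempty (IsotypicDecomposition F Y) := by
  classical
  obtain ⟨n, obj, p, q, obj_simple, sum_pq, qp_self, qp_ne⟩ := PreFusionCat.semisimple (k := k) Y
  choose type iso using fun a => hF.exists_iso (obj a) (obj_simple a)
  replace iso := fun a => (iso a).some
  let proj (i : ι) (a : {a // type a = i}) : Y ⟶ F i :=
    p a ≫ (iso a).hom ≫ eqToHom (congrArg F a.2)
  let incl (i : ι) (a : {a // type a = i}) : F i ⟶ Y :=
    eqToHom (congrArg F a.2.symm) ≫ (iso a).inv ≫ q a
  have proj_incl (i : ι) (a : {a // type a = i}) : proj i a ≫ incl i a = p a ≫ q a := by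
    simp [proj, incl]
  refine ⟨{
    Copy := fun i => {a // type a = i}, proj, incl,
    sum_proj_comp_incl := ?_, incl_comp_proj := ?_ }⟩
  · simp only [proj_incl, ← sum_pq]
    exact Fintype.sum_fiberwise type fun a => p a ≫ q a
  · intro i a b
    split_ifs with hab
    · subst hab
      simp [proj, incl, reassoc_of% qp_self a.1]
    · simp [proj, incl, reassoc_of% qp_ne a.1 b.1 (hab ∘ Subtype.ext)]

theorem IsSimpleFamily.span_range_proj (hF : IsSimpleFamily k F) {Y : C}
    (D : IsotypicDecomposition F Y) (i : ι) :
    Submodule.span k (Set.range (D.proj i)) = ⊤ := by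
  refine eq_top_iff.2 fun f _ => ?_
  have expand : f = ∑ a, D.proj i a ≫ D.incl i a ≫ f := by
    calc f = (∑ j, ∑ a, D.proj j a ≫ D.incl j a) ≫ f := by
          rw [D.sum_proj_comp_incl, Category.id_comp]
      _ = ∑ j, ∑ a, D.proj j a ≫ D.incl j a ≫ f := by simp [Preadditive.sum_comp]
      _ = ∑ a, D.proj i a ≫ D.incl i a ≫ f :=
          Fintype.sum_eq_single i fun j hj => Finset.sum_eq_zero fun a _ => by
            rw [hF.hom_eq_zero hj (D.incl j a ≫ f), comp_zero]
  rw [expand]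
  refine Submodule.sum_mem _ fun a _ => ?_
  obtain ⟨c, hc⟩ := (hF.isSimpleObj i).2 (D.incl i a ≫ f)
  rw [← hc, Linear.comp_smul, Category.comp_id]
  exact Submodule.smul_mem _ c (Submodule.subset_span ⟨a, rfl⟩)

theorem IsSimpleFamily.span_range_incl (hF : IsSimpleFamily k F) {Y : C}
    (D : IsotypicDecomposition F Y) (i : ι) :
    Submodule.span k (Set.range (D.incl i)) = ⊤ := by
  refine eq_top_iff.2 fun f _ => ?_
  have expand : f = ∑ a, (f ≫ D.proj i a) ≫ D.incl i a := by
    calc f = f ≫ ∑ j, ∑ a, D.proj j a ≫ D.incl j a := by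
          rw [D.sum_proj_comp_incl, Category.comp_id]
      _ = ∑ j, ∑ a, (f ≫ D.proj j a) ≫ D.incl j a := by simp [Preadditive.comp_sum]
      _ = ∑ a, (f ≫ D.proj i a) ≫ D.incl i a :=
          Fintype.sum_eq_single i fun j hj => Finset.sum_eq_zero fun a _ => by
            rw [hF.hom_eq_zero hj.symm (f ≫ D.proj j a), zero_comp]
  rw [expand]
  refine Submodule.sum_mem _ fun a _ => ?_
  obtain ⟨c, hc⟩ := (hF.isSimpleObj i).2 (f ≫ D.proj i a)
  rw [← hc, Linear.smul_comp, Category.id_comp]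
  exact Submodule.smul_mem _ c (Submodule.subset_span ⟨a, rfl⟩)

open scoped TensorProduct in
theorem IsSimpleFamily.sdimr_smul_sum_tmul_eq (hF : IsSimpleFamily k F) {X : C} {i j : ι}
    (D : IsotypicDecomposition (fun j => PivotalCat.dual (F j)) (X ⊗ PivotalCat.dual (F i)))
    (E : IsotypicDecomposition F (F j ⊗ X)) :
    sdimr k (F i) • ∑ a, tensorRightHomLinearEquiv k X _ (F i) _ (D.proj j a) ⊗ₜ[k]
      (tensorRightHomLinearEquiv k _ (F i) _ X).symm (D.incl j a) =
    sdimr k (F j) • ∑ a, tensorLeftHomLinearEquiv k X _ (F j) _ (E.proj i a) ⊗ₜ[k]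
      (tensorLeftHomLinearEquiv k _ (F j) _ X).symm (E.incl i a) := by
  refine smul_sum_tmul_eq_smul_sum_tmul_of_dual (tracePairing k X (F j) (F i))
    (fun a b => ?_) (fun a b => ?_) ?_ ?_
  · rw [tracePairing_tensorRight, D.incl_comp_proj]
    split_ifs
    · simp [sdimr, dimr, trr, toScalarLinearMap]
    · simp
  · rw [tracePairing_tensorLeft, E.incl_comp_proj]
    split_ifs
    · rfl
    · simp [trr]
  · rw [Set.range_comp', ← LinearEquiv.coe_coe, ← Submodule.map_span, hF.span_range_proj,
      Submodule.map_top, LinearEquiv.range]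
  · rw [Set.range_comp', ← LinearEquiv.coe_coe, ← Submodule.map_span, hF.dual.span_range_incl,
      Submodule.map_top, LinearEquiv.range]

end Decomposition

/-! ### Half braidings -/

section HalfBraiding

variable {C : Type u} [Category.{v} C] [MonoidalCategory C] {A B : C}

theorem halfBraiding_unit_hom (τ : HalfBraiding B) :
    (τ.β (𝟙_ C)).hom = (ρ_ B).hom ≫ (λ_ B).inv := by
  have idem : (ρ_ B).hom ▷ 𝟙_ C ≫ (τ.β (𝟙_ C)).hom =
      ((τ.β (𝟙_ C)).hom ≫ (λ_ B).hom) ▷ 𝟙_ C ≫ (τ.β (𝟙_ C)).hom := by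
    have h := τ.naturality (λ_ (𝟙_ C)).hom
    rw [τ.monoidal] at h
    rw [← cancel_epi (α_ B (𝟙_ C) (𝟙_ C)).inv]
    calc _ = B ◁ (λ_ (𝟙_ C)).hom ≫ (τ.β (𝟙_ C)).hom := by monoidal
      _ = _ := by rw [h]; monoidal
  have h := whiskerRight_iff _ _ |>.1 ((cancel_mono _).1 idem)
  rw [Iso.eq_comp_inv, ← h]

/-- `f` is a morphism of the Drinfeld center from `(A, σ)` to `(B, τ)`. -/
def IsCenterHom (σ : HalfBraiding A) (τ : HalfBraiding B) (f : A ⟶ B) : Prop :=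
  ∀ X : C, (σ.β X).hom ≫ X ◁ f = f ▷ X ≫ (τ.β X).hom

/-- `f` passes between the strands `Y` and `Z`, crossing `Y` by `σ` before it is applied and `Z` by
`τ` after it is applied. -/
def thread (σ : HalfBraiding A) (τ : HalfBraiding B) (f : A ⟶ B) (Y Z : C) :
    A ⊗ Y ⊗ Z ⟶ (Y ⊗ Z) ⊗ B :=
  (α_ A Y Z).inv ≫ (σ.β Y).hom ▷ Z ≫ (Y ◁ f) ▷ Z ≫ (α_ Y B Z).hom ≫ Y ◁ (τ.β Z).hom ≫
    (α_ Y Z B).inv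

variable (σ : HalfBraiding A) (τ : HalfBraiding B) (f : A ⟶ B)

theorem thread_naturality_left {Y Y' : C} (g : Y ⟶ Y') (Z : C) :
    A ◁ g ▷ Z ≫ thread σ τ f Y' Z = thread σ τ f Y Z ≫ g ▷ Z ▷ B := by
  simp only [thread]
  calc
    _ = (α_ A Y Z).inv ≫ (A ◁ g ≫ (σ.β Y').hom) ▷ Z ≫ (Y' ◁ f) ▷ Z ≫ (α_ Y' B Z).hom ≫
        Y' ◁ (τ.β Z).hom ≫ (α_ Y' Z B).inv := by simp [-HalfBraiding.naturality]
    _ = (α_ A Y Z).inv ≫ (σ.β Y).hom ▷ Z ≫ (g ▷ A ≫ Y' ◁ f) ▷ Z ≫ (α_ Y' B Z).hom ≫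
        Y' ◁ (τ.β Z).hom ≫ (α_ Y' Z B).inv := by rw [σ.naturality]; simp
    _ = (α_ A Y Z).inv ≫ (σ.β Y).hom ▷ Z ≫ (Y ◁ f) ▷ Z ≫ (α_ Y B Z).hom ≫
        (g ▷ (B ⊗ Z) ≫ Y' ◁ (τ.β Z).hom) ≫ (α_ Y' Z B).inv := by
      rw [← whisker_exchange]; simp
    _ = _ := by rw [← whisker_exchange]; simp

theorem thread_naturality_right (Y : C) {Z Z' : C} (g : Z ⟶ Z') :
    A ◁ Y ◁ g ≫ thread σ τ f Y Z' = thread σ τ f Y Z ≫ (Y ◁ g) ▷ B := by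
  simp only [thread]
  calc
    _ = (α_ A Y Z).inv ≫ ((A ⊗ Y) ◁ g ≫ ((σ.β Y).hom ≫ Y ◁ f) ▷ Z') ≫ (α_ Y B Z').hom ≫
        Y ◁ (τ.β Z').hom ≫ (α_ Y Z' B).inv := by simp
    _ = (α_ A Y Z).inv ≫ ((σ.β Y).hom ≫ Y ◁ f) ▷ Z ≫ (α_ Y B Z).hom ≫
        Y ◁ (B ◁ g ≫ (τ.β Z').hom) ≫ (α_ Y Z' B).inv := by
      rw [whisker_exchange]; simp [-HalfBraiding.naturality]
    _ = _ := by rw [τ.naturality]; simp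

variable {σ τ f} in
theorem IsCenterHom.thread_eq (hf : IsCenterHom σ τ f) (Y Z : C) :
    thread σ τ f Y Z = f ▷ (Y ⊗ Z) ≫ (τ.β (Y ⊗ Z)).hom := by
  rw [thread, ← comp_whiskerRight_assoc, hf Y, τ.monoidal]
  simp

variable [PivotalCat C]

/-- `f` encircled by a loop coloured by `i`: the summand of `piMap` at `i`, without its
coefficient. -/
def encircle (i : C) : A ⟶ B :=
  (ρ_ A).inv ≫ A ◁ coevr i ≫ thread σ τ f (dual i) i ≫ evl i ▷ B ≫ (λ_ B).hom

variable {σ τ f} in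
theorem IsCenterHom.encircle_eq (hf : IsCenterHom σ τ f) (i : C) :
    encircle σ τ f i = f ≫ (ρ_ B).inv ≫ B ◁ diml i ≫ (ρ_ B).hom := by
  rw [encircle, hf.thread_eq, Category.assoc, whisker_exchange_assoc, ← τ.naturality_assoc,
    halfBraiding_unit_hom]
  simp [diml, trl]

theorem braid_comp_whiskerLeft_encircle (X i : C) :
    (σ.β X).hom ≫ X ◁ encircle σ τ f i =
      A ◁ tensorRightHomEquiv X (dual i) i (X ⊗ dual i) (𝟙 _) ≫ thread σ τ f (X ⊗ dual i) i ≫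
        (tensorRightHomEquiv (X ⊗ dual i) i (dual i) X).symm (𝟙 _) ▷ B := by
  change _ = A ◁ ((ρ_ X).inv ≫ X ◁ coevr i ≫ (α_ X (dual i) i).inv ≫ 𝟙 _ ▷ i) ≫ _ ≫
    (𝟙 _ ▷ i ≫ (α_ X (dual i) i).hom ≫ X ◁ evl i ≫ (ρ_ X).hom) ▷ B
  simp only [thread, encircle, σ.monoidal]
  calc
    _ = 𝟙 _ ⊗≫ ((σ.β X).hom ▷ 𝟙_ C ≫ (X ⊗ A) ◁ coevr i) ⊗≫ X ◁ (σ.β (dual i)).hom ▷ i ⊗≫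
        X ◁ dual i ◁ f ▷ i ⊗≫ X ◁ dual i ◁ (τ.β i).hom ⊗≫ X ◁ evl i ▷ B ⊗≫ 𝟙 _ := by monoidal
    _ = _ := by rw [← whisker_exchange]; monoidal

theorem whiskerRight_encircle_comp_braid (X j : C) :
    encircle σ τ f j ▷ X ≫ (τ.β X).hom =
      A ◁ tensorLeftHomEquiv X (dual j) j (j ⊗ X) (𝟙 _) ≫ thread σ τ f (dual j) (j ⊗ X) ≫
        (tensorLeftHomEquiv (j ⊗ X) j (dual j) X).symm (𝟙 _) ▷ B := by
  change _ = A ◁ ((λ_ X).inv ≫ coevr j ▷ X ≫ (α_ (dual j) j X).hom ≫ dual j ◁ 𝟙 _) ≫ _ ≫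
    (dual j ◁ 𝟙 _ ≫ (α_ (dual j) j X).inv ≫ evl j ▷ X ≫ (λ_ X).hom) ▷ B
  simp only [thread, encircle, τ.monoidal]
  calc
    _ = 𝟙 _ ⊗≫ A ◁ coevr j ▷ X ⊗≫ (σ.β (dual j)).hom ▷ j ▷ X ⊗≫ dual j ◁ f ▷ j ▷ X ⊗≫
        dual j ◁ (τ.β j).hom ▷ X ⊗≫ (evl j ▷ (B ⊗ X) ≫ 𝟙_ C ◁ (τ.β X).hom) ⊗≫ 𝟙 _ := by
      monoidal
    _ = _ := by rw [← whisker_exchange]; monoidal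

end HalfBraiding

/-! ### The averaging operator -/

section Average

variable (k : Type w) [CommRing k] {C : Type u} [Category.{v} C] [Preadditive C]
  [CategoryTheory.Linear k C] [MonoidalCategory C] [MonoidalPreadditive C]
  [CategoryTheory.MonoidalLinear k C] {A B : C} (σ : HalfBraiding A) (τ : HalfBraiding B)
  (f : A ⟶ B)

/-- `thread` with the two strands split off from `X` and merged back into `X`, as a bilinear map in
the splitting and merging morphisms. -/
def threadBilin (X Y Z : C) : (X ⟶ Y ⊗ Z) →ₗ[k] (Y ⊗ Z ⟶ X) →ₗ[k] (A ⊗ X ⟶ X ⊗ B) :=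
  LinearMap.mk₂ k (fun u v => A ◁ u ≫ thread σ τ f Y Z ≫ v ▷ B)
    (by simp) (by simp) (by simp) (by simp)

variable {ι : Type*} [Fintype ι] {F : ι → C}

theorem braid_comp_whiskerLeft_encircle_eq_sum [PivotalCat C] {X i : C}
    (D : IsotypicDecomposition F (X ⊗ dual i)) :
    (σ.β X).hom ≫ X ◁ encircle σ τ f i = ∑ j, ∑ a, threadBilin k σ τ f X (F j) i
      (tensorRightHomLinearEquiv k X (dual i) i (F j) (D.proj j a))
      ((tensorRightHomLinearEquiv k (F j) i (dual i) X).symm (D.incl j a)) := by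
  have merge_eq_sum : (tensorRightHomEquiv (X ⊗ dual i) i (dual i) X).symm (𝟙 _) =
      ∑ j, ∑ a, D.proj j a ▷ i ≫ (tensorRightHomEquiv (F j) i (dual i) X).symm (D.incl j a) := by
    change (tensorRightHomLinearEquiv k (X ⊗ dual i) i (dual i) X).symm _ = _
    simp only [← D.sum_proj_comp_incl, map_sum, ← tensorRightHomEquiv_symm_naturality]
    rfl
  rw [braid_comp_whiskerLeft_encircle, merge_eq_sum]
  simp only [sum_whiskerRight, Preadditive.comp_sum, comp_whiskerRight,
    ← reassoc_of% thread_naturality_left σ τ f, ← whiskerLeft_comp_assoc,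
    ← tensorRightHomEquiv_naturality, Category.id_comp]
  rfl

theorem whiskerRight_encircle_comp_braid_eq_sum [PivotalCat C] {X j : C}
    (D : IsotypicDecomposition F (j ⊗ X)) :
    encircle σ τ f j ▷ X ≫ (τ.β X).hom = ∑ i, ∑ a, threadBilin k σ τ f X (dual j) (F i)
      (tensorLeftHomLinearEquiv k X (dual j) j (F i) (D.proj i a))
      ((tensorLeftHomLinearEquiv k (F i) j (dual j) X).symm (D.incl i a)) := by
  have merge_eq_sum : (tensorLeftHomEquiv (j ⊗ X) j (dual j) X).symm (𝟙 _) =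
      ∑ i, ∑ a, dual j ◁ D.proj i a ≫
        (tensorLeftHomEquiv (F i) j (dual j) X).symm (D.incl i a) := by
    change (tensorLeftHomLinearEquiv k (j ⊗ X) j (dual j) X).symm _ = _
    simp only [← D.sum_proj_comp_incl, map_sum, ← tensorLeftHomEquiv_symm_naturality]
    rfl
  rw [whiskerRight_encircle_comp_braid, merge_eq_sum]
  simp only [sum_whiskerRight, Preadditive.comp_sum, comp_whiskerRight,
    ← reassoc_of% thread_naturality_right σ τ f, ← whiskerLeft_comp_assoc,
    ← tensorLeftHomEquiv_naturality, Category.id_comp]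
  rfl

variable {k} [PivotalCat C] [MonoidalKCat k C]

variable {σ τ f} in
theorem IsCenterHom.encircle_eq_smul (hf : IsCenterHom σ τ f) (i : C) :
    encircle σ τ f i = sdiml k i • f := by
  rw [hf.encircle_eq, ← toScalar_smul_id k (diml i)]
  simp [sdiml]

theorem IsSimpleFamily.isCenterHom_sum_sdimr_smul_encircle [HasFiniteBiproducts C]
    [PreFusionCat k C] (hF : IsSimpleFamily k F) :
    IsCenterHom σ τ (∑ i, sdimr k (F i) • encircle σ τ f (F i)) := by
  intro X
  let D (i : ι) := (hF.dual.nonempty_isotypicDecomposition (X ⊗ PivotalCat.dual (F i))).some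
  let E (j : ι) := (hF.nonempty_isotypicDecomposition (F j ⊗ X)).some
  calc
    _ = ∑ i, sdimr k (F i) • ((σ.β X).hom ≫ X ◁ encircle σ τ f (F i)) := by
      simp [whiskerLeft_sum, Preadditive.comp_sum]
    _ = ∑ j, sdimr k (F j) • (encircle σ τ f (F j) ▷ X ≫ (τ.β X).hom) := by
      simp only [braid_comp_whiskerLeft_encircle_eq_sum k σ τ f (D _),
        whiskerRight_encircle_comp_braid_eq_sum k σ τ f (E _),
        Finset.smul_sum (s := (Finset.univ : Finset ι))]
      rw [Finset.sum_comm]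
      refine Finset.sum_congr rfl fun j _ => Finset.sum_congr rfl fun i _ => ?_
      simpa only [map_smul, map_sum, TensorProduct.lift.tmul] using
        congrArg (TensorProduct.lift (threadBilin k σ τ f X _ (F i)))
          (hF.sdimr_smul_sum_tmul_eq (D i) (E j))
    _ = _ := by simp [sum_whiskerRight, Preadditive.sum_comp]

variable (k) in
/-- The variant of `piMap` in which the loops are weighted by their right dimensions. This is the
weighting for which the average is central even when left and right dimensions differ. -/
noncomputable def rightPiMap (I : Finset C) (σ : HalfBraiding A) (τ : HalfBraiding B) (f : A ⟶ B) :
    A ⟶ B :=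
  Ring.inverse (catDim k I) • ∑ i ∈ I, sdimr k i • encircle σ τ f i

theorem isCenterHom_rightPiMap [HasFiniteBiproducts C] [PreFusionCat k C] {I : Finset C}
    (hI : IsRepresentativeSet k C ↑I) : IsCenterHom σ τ (rightPiMap k I σ τ f) := by
  intro X
  have simple : IsSimpleFamily k (Subtype.val : I → C) := .of_isRepresentativeSet hI
  have sum_central := simple.isCenterHom_sum_sdimr_smul_encircle σ τ f X
  rw [Finset.sum_coe_sort I fun i => sdimr k i • encircle σ τ f i] at sum_central
  simp [rightPiMap, sum_central]

variable {σ τ f} in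
theorem IsCenterHom.rightPiMap_eq (hf : IsCenterHom σ τ f) {I : Finset C}
    (hdim : IsUnit (catDim k I)) : rightPiMap k I σ τ f = f :=
  calc rightPiMap k I σ τ f
      = (Ring.inverse (catDim k I) * ∑ i ∈ I, sdimr k i * sdiml k i) • f := by
        simp only [rightPiMap, hf.encircle_eq_smul (k := k), smul_smul, ← Finset.sum_smul]
    _ = (Ring.inverse (catDim k I) * catDim k I) • f := by
        simp only [catDim, mul_comm (sdimr k _)]
    _ = f := by rw [Ring.inverse_mul_cancel _ hdim, one_smul]

theorem piMap_eq_rightPiMap [SphericalCat C] (I : Finset C) :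
    piMap k I σ τ = rightPiMap k I σ τ := by
  have sdiml_eq_sdimr (i : C) : sdiml k i = sdimr k i := by
    rw [sdiml, sdimr, diml, dimr, SphericalCat.tr_eq]
  funext f
  simp only [piMap, rightPiMap, encircle, thread, sdiml_eq_sdimr, Category.assoc]

end Average

end PivotalCat

open PivotalCat in
theorem piMap_idempotent_range_center_general (k : Type w) [CommRing k] (C : Type u)
    [Category.{v} C] [Preadditive C] [CategoryTheory.Linear k C] [MonoidalCategory C]
    [MonoidalPreadditive C] [CategoryTheory.MonoidalLinear k C]
    [CategoryTheory.Limits.HasFiniteBiproducts C] [PivotalCat C] [MonoidalKCat k C]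
    [PreFusionCat k C] (I : Finset C) (hI : IsRepresentativeSet k C ↑I)
    (hdim : IsUnit (catDim k I)) {A B : C} (σ : HalfBraiding A) (τ : HalfBraiding B) :
    (∀ f : A ⟶ B, rightPiMap k I σ τ (rightPiMap k I σ τ f) = rightPiMap k I σ τ f) ∧
    Set.range (rightPiMap k I σ τ) =
      {f : A ⟶ B | ∀ X : C, (σ.β X).hom ≫ (X ◁ f) = (f ▷ X) ≫ (τ.β X).hom} := by
  have center (f : A ⟶ B) : IsCenterHom σ τ (rightPiMap k I σ τ f) :=
    isCenterHom_rightPiMap σ τ f hI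
  refine ⟨fun f => (center f).rightPiMap_eq hdim, Set.Subset.antisymm ?_ fun f hf => ?_⟩
  · rintro _ ⟨f, rfl⟩
    exact center f
  · exact ⟨f, IsCenterHom.rightPiMap_eq hf hdim⟩

open PivotalCat in
/-- Lemma 10.1 (Müger): let `C` be a spherical fusion category over `k` with
representative set `I` of simple objects and `dim C` invertible in `k`.  For half
braidings `(A, σ)` and `(B, τ)` of `C`, the operator `π` on `Hom_C(A, B)` is an
idempotent whose image is exactly
`Hom_{Z(C)}((A,σ), (B,τ)) = {f | (id_X ⊗ f) σ_X = τ_X (f ⊗ id_X) for all X}`. -/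
theorem piMap_idempotent_range_center (k : Type w) [CommRing k] (C : Type u)
    [Category.{v} C] [Preadditive C] [CategoryTheory.Linear k C] [MonoidalCategory C]
    [MonoidalPreadditive C] [CategoryTheory.MonoidalLinear k C]
    [CategoryTheory.Limits.HasFiniteBiproducts C] [PivotalCat C] [MonoidalKCat k C]
    [PreFusionCat k C] [FusionCat k C] [SphericalCat C]
    (I : Finset C) (hI : IsRepresentativeSet k C ↑I) (hdim : IsUnit (catDim k I))
    {A B : C} (σ : HalfBraiding A) (τ : HalfBraiding B) :
    (∀ f : A ⟶ B, piMap k I σ τ (piMap k I σ τ f) = piMap k I σ τ f) ∧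
    Set.range (piMap k I σ τ) =
      {f : A ⟶ B | ∀ X : C, (σ.β X).hom ≫ (X ◁ f) = (f ▷ X) ≫ (τ.β X).hom} := by
  simpa only [piMap_eq_rightPiMap] using piMap_idempotent_range_center_general k C I hI hdim σ τ
end

section
/- Every pre-fusion category C over a commutative ring k is non-degenerate: for every object X of C, the k-bilinear form ω_X : Hom(𝟙, X*) ⊗ Hom(𝟙, X) → k, α ⊗ β ↦ ev_l(X) ∘ (α ⊗ β), is non-degenerate. -/
open CategoryTheory CategoryTheory.Limits MonoidalCategory

universe v u w

/-- A pairing `ω : M × N → k` of `k`-modules is non-degenerate if it admits an inverse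
copairing: finite families `(a_i)` in `N` and `(b_i)` in `M` (representing an element
`Ω(1) = ∑ a_i ⊗ b_i` of `N ⊗ M`) such that `(id_N ⊗ ω)(Ω ⊗ id_N) = id_N` and
`(ω ⊗ id_M)(id_M ⊗ Ω) = id_M`. -/
def IsNondegeneratePairing (k : Type w) [CommRing k] {M N : Type*}
    [AddCommMonoid M] [Module k M] [AddCommMonoid N] [Module k N]
    (ω : M → N → k) : Prop :=
  ∃ (n : ℕ) (a : Fin n → N) (b : Fin n → M),
    (∀ y : N, ∑ i, ω (b i) y • a i = y) ∧ (∀ x : M, ∑ i, ω x (a i) • b i = x)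

/-- The evaluation pairing `ω_X : Hom(𝟙, X*) × Hom(𝟙, X) → k`,
`(α, β) ↦ ev_l X ∘ (α ⊗ β)`. -/
noncomputable def omegaX (k : Type w) [CommRing k] {C : Type u} [Category.{v} C]
    [Preadditive C] [CategoryTheory.Linear k C] [MonoidalCategory C]
    [MonoidalPreadditive C] [CategoryTheory.MonoidalLinear k C] [PivotalCat C]
    [MonoidalKCat k C] (X : C) :
    (𝟙_ C ⟶ PivotalCat.dual X) → (𝟙_ C ⟶ X) → k :=
  fun a b => toScalar k ((λ_ (𝟙_ C)).inv ≫ (a ⊗ₘ b) ≫ PivotalCat.evl X)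

/-!
Bending the left leg along the duality `X* ⊣ X` is a linear isomorphism `Hom(𝟙, X*) ≃ Hom(X, 𝟙)`
which turns `ω_X` into the composition pairing `Hom(X, 𝟙) × Hom(𝟙, X) → End(𝟙) = k`. For a simple
object `Z`, the class of objects `X` whose composition pairing with `Z` is non-degenerate contains
the objects isomorphic to `Z` and those with no nonzero morphisms to or from `Z`, and it is closed
under finite direct sums; in a pre-fusion category this exhausts all objects.
-/

namespace IsNondegeneratePairing

variable {k : Type w} [CommRing k] {M N : Type*} [AddCommMonoid M] [Module k M]
  [AddCommMonoid N] [Module k N] {ω : M → N → k}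

theorem of_fintype {ι : Type*} [Fintype ι] (a : ι → N) (b : ι → M)
    (ha : ∀ y, ∑ i, ω (b i) y • a i = y) (hb : ∀ x, ∑ i, ω x (a i) • b i = x) :
    IsNondegeneratePairing k ω := by
  let e := (Fintype.equivFin ι).symm
  refine ⟨Fintype.card ι, a ∘ e, b ∘ e, fun y => ?_, fun x => ?_⟩
  · exact (e.sum_comp fun i => ω (b i) y • a i).trans (ha y)
  · exact (e.sum_comp fun i => ω x (a i) • b i).trans (hb x)

theorem of_subsingleton [Subsingleton M] [Subsingleton N] : IsNondegeneratePairing k ω :=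
  ⟨0, Fin.elim0, Fin.elim0, fun _ => Subsingleton.elim _ _, fun _ => Subsingleton.elim _ _⟩

theorem comp_linearEquiv {M' : Type*} [AddCommMonoid M'] [Module k M']
    (hω : IsNondegeneratePairing k ω) (e : M' ≃ₗ[k] M) :
    IsNondegeneratePairing k fun x y => ω (e x) y := by
  obtain ⟨n, a, b, ha, hb⟩ := hω
  refine ⟨n, a, fun i => e.symm (b i), fun y => by simpa using ha y, fun x => e.injective ?_⟩
  simpa using hb (e x)

end IsNondegeneratePairing

namespace IsSimpleObj

variable {k : Type w} [CommRing k] {C : Type u} [Category.{v} C] [Preadditive C]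
  [CategoryTheory.Linear k C] {X Z : C}

/-- The inverse `End(Z) → k` of `λ ↦ λ • id_Z` for a simple object `Z`; for `Z = 𝟙` it is
`toScalar`. -/
noncomputable def scalar (hZ : IsSimpleObj k Z) (f : Z ⟶ Z) : k :=
  (Equiv.ofBijective _ hZ).symm f

theorem scalar_smul_id (hZ : IsSimpleObj k Z) (f : Z ⟶ Z) : hZ.scalar f • 𝟙 Z = f :=
  (Equiv.ofBijective _ hZ).apply_symm_apply f

theorem scalar_smul_eq_comp (hZ : IsSimpleObj k Z) (f : Z ⟶ Z) (g : Z ⟶ X) :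
    hZ.scalar f • g = f ≫ g := by
  rw [← Category.id_comp g, ← Linear.smul_comp, hZ.scalar_smul_id, Category.id_comp]

theorem scalar_smul_eq_comp' (hZ : IsSimpleObj k Z) (f : Z ⟶ Z) (g : X ⟶ Z) :
    hZ.scalar f • g = g ≫ f := by
  rw [← Category.comp_id g, ← Linear.comp_smul, hZ.scalar_smul_id, Category.comp_id]

/-- The composition pairing `Hom(X, Z) × Hom(Z, X) → End(Z) = k` with a simple object `Z`. -/
noncomputable def compPairing (hZ : IsSimpleObj k Z) (X : C) (f : X ⟶ Z) (g : Z ⟶ X) : k :=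
  hZ.scalar (g ≫ f)

theorem isNondegeneratePairing_compPairing_of_iso (hZ : IsSimpleObj k Z) (e : X ≅ Z) :
    IsNondegeneratePairing k (hZ.compPairing X) := by
  refine .of_fintype (fun _ : Unit => e.inv) (fun _ => e.hom) (fun g => ?_) (fun f => ?_)
  · simp [compPairing, scalar_smul_eq_comp]
  · simp [compPairing, scalar_smul_eq_comp']

theorem isNondegeneratePairing_compPairing_of_sum_eq_id (hZ : IsSimpleObj k Z) {ι : Type*}
    [Fintype ι] {S : ι → C} (p : ∀ a, X ⟶ S a) (q : ∀ a, S a ⟶ X)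
    (hpq : ∑ a, p a ≫ q a = 𝟙 X) (hS : ∀ a, IsNondegeneratePairing k (hZ.compPairing (S a))) :
    IsNondegeneratePairing k (hZ.compPairing X) := by
  choose n g f hg hf using hS
  refine .of_fintype (ι := Σ a, Fin (n a)) (fun i => g i.1 i.2 ≫ q i.1)
    (fun i => p i.1 ≫ f i.1 i.2) (fun y => ?_) (fun x => ?_)
  · calc ∑ i : Σ a, Fin (n a), hZ.compPairing X (p i.1 ≫ f i.1 i.2) y • g i.1 i.2 ≫ q i.1
      _ = ∑ a, (∑ j, hZ.compPairing (S a) (f a j) (y ≫ p a) • g a j) ≫ q a := by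
        simp only [Fintype.sum_sigma, compPairing, Preadditive.sum_comp, Linear.smul_comp,
          Category.assoc]
      _ = y ≫ ∑ a, p a ≫ q a := by simp only [hg, Preadditive.comp_sum, Category.assoc]
      _ = y := by rw [hpq, Category.comp_id]
  · calc ∑ i : Σ a, Fin (n a), hZ.compPairing X x (g i.1 i.2 ≫ q i.1) • p i.1 ≫ f i.1 i.2
      _ = ∑ a, p a ≫ ∑ j, hZ.compPairing (S a) (q a ≫ x) (g a j) • f a j := by
        simp only [Fintype.sum_sigma, compPairing, Preadditive.comp_sum, Linear.comp_smul,
          Category.assoc]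
      _ = (∑ a, p a ≫ q a) ≫ x := by simp only [hf, Preadditive.sum_comp, Category.assoc]
      _ = x := by rw [hpq, Category.id_comp]

end IsSimpleObj

section Duality

variable {C : Type u} [Category.{v} C] [MonoidalCategory C]

/-- The left duality of a pivotal category, as an exact pairing. -/
instance PivotalCat.exactPairing [PivotalCat C] (X : C) : ExactPairing X (dual X) where
  coevaluation' := coevl X
  evaluation' := evl X
  coevaluation_evaluation' := by
    rw [← Iso.inv_comp_eq, ← cancel_mono (λ_ (dual X)).hom]
    simpa using left_zigzag₂ X
  evaluation_coevaluation' := by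
    rw [← Iso.inv_comp_eq, ← cancel_mono (ρ_ X).hom]
    simpa using left_zigzag₁ X

/-- The bijection between morphisms `𝟙 ⟶ Y` and `X ⟶ 𝟙` obtained by bending a leg along an exact
pairing of `X` and `Y`. -/
def unitHomEquivHomUnit (X Y : C) [ExactPairing X Y] : (𝟙_ C ⟶ Y) ≃ (X ⟶ 𝟙_ C) :=
  (λ_ Y).symm.homToEquiv.trans <|
    (tensorRightHomEquiv (𝟙_ C) X Y (𝟙_ C)).symm.trans (λ_ X).homFromEquiv

theorem unitHomEquivHomUnit_apply (X Y : C) [ExactPairing X Y] (a : 𝟙_ C ⟶ Y) :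
    unitHomEquivHomUnit X Y a = (λ_ X).inv ≫ a ▷ X ≫ ε_ X Y := by
  change (λ_ X).inv ≫ (a ≫ (λ_ Y).inv) ▷ X ≫ (α_ _ _ _).hom ≫ 𝟙_ C ◁ ε_ X Y ≫ (ρ_ _).hom = _
  monoidal

theorem comp_unitHomEquivHomUnit (X Y : C) [ExactPairing X Y] (a : 𝟙_ C ⟶ Y) (b : 𝟙_ C ⟶ X) :
    b ≫ unitHomEquivHomUnit X Y a = (λ_ (𝟙_ C)).inv ≫ (a ⊗ₘ b) ≫ ε_ X Y := by
  rw [unitHomEquivHomUnit_apply, tensorHom_def', Category.assoc,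
    leftUnitor_inv_naturality_assoc]

/-- The bijection `unitHomEquivHomUnit` as a `k`-linear isomorphism. -/
def unitHomLinearEquivHomUnit (k : Type w) [CommRing k] [Preadditive C]
    [CategoryTheory.Linear k C] [MonoidalPreadditive C] [CategoryTheory.MonoidalLinear k C]
    (X Y : C) [ExactPairing X Y] : (𝟙_ C ⟶ Y) ≃ₗ[k] (X ⟶ 𝟙_ C) :=
  (unitHomEquivHomUnit X Y).toLinearEquiv
    { map_add := fun a b => by simp [unitHomEquivHomUnit_apply]
      map_smul := fun r a => by simp [unitHomEquivHomUnit_apply] }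

end Duality

theorem PreFusionCat.nonempty_iso_or_subsingleton_hom (k : Type w) [CommRing k] {C : Type u}
    [Category.{v} C] [Preadditive C] [CategoryTheory.Linear k C] [MonoidalCategory C]
    [MonoidalPreadditive C] [CategoryTheory.MonoidalLinear k C]
    [HasFiniteBiproducts C] [PivotalCat C] [MonoidalKCat k C] [PreFusionCat k C] {X Y : C}
    (hX : IsSimpleObj k X) (hY : IsSimpleObj k Y) :
    Nonempty (X ≅ Y) ∨ Subsingleton (X ⟶ Y) ∧ Subsingleton (Y ⟶ X) := by
  refine or_iff_not_imp_left.2 fun hXY => ⟨subsingleton_of_forall_eq 0 ?_,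
    subsingleton_of_forall_eq 0 ?_⟩
  · exact simple_hom_zero hX hY (not_nonempty_iff.1 hXY)
  · exact simple_hom_zero hY hX ⟨fun e => hXY ⟨e.symm⟩⟩

theorem preFusion_nondegenerate_general (k : Type w) [CommRing k] {C : Type u}
    [Category.{v} C] [Preadditive C] [CategoryTheory.Linear k C] [MonoidalCategory C]
    [MonoidalPreadditive C] [CategoryTheory.MonoidalLinear k C] [MonoidalKCat k C]
    (X Y : C) [ExactPairing X Y] {ι : Type*} [Fintype ι] {S : ι → C}
    (p : ∀ a, X ⟶ S a) (q : ∀ a, S a ⟶ X) (hpq : ∑ a, p a ≫ q a = 𝟙 X)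
    (hS : ∀ a, Nonempty (S a ≅ 𝟙_ C) ∨ Subsingleton (S a ⟶ 𝟙_ C) ∧ Subsingleton (𝟙_ C ⟶ S a)) :
    IsNondegeneratePairing k fun (a : 𝟙_ C ⟶ Y) (b : 𝟙_ C ⟶ X) =>
      toScalar k ((λ_ (𝟙_ C)).inv ≫ (a ⊗ₘ b) ≫ ε_ X Y) := by
  have hunit : IsSimpleObj k (𝟙_ C) := MonoidalKCat.unit_free
  have hcomp : IsNondegeneratePairing k (hunit.compPairing X) := by
    refine hunit.isNondegeneratePairing_compPairing_of_sum_eq_id p q hpq fun a => ?_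
    obtain ⟨⟨e⟩⟩ | ⟨_, _⟩ := hS a
    · exact hunit.isNondegeneratePairing_compPairing_of_iso e
    · exact .of_subsingleton
  simp only [← comp_unitHomEquivHomUnit]
  exact hcomp.comp_linearEquiv (unitHomLinearEquivHomUnit k X Y)

/-- Every pre-fusion category over a commutative ring `k` is non-degenerate: for every
object `X`, the pairing `ω_X : Hom(𝟙, X*) × Hom(𝟙, X) → k`, `(α, β) ↦ ev_l X ∘ (α ⊗ β)`,
is non-degenerate. -/
theorem preFusion_nondegenerate (k : Type w) [CommRing k] (C : Type u)
    [Category.{v} C] [Preadditive C] [CategoryTheory.Linear k C] [MonoidalCategory C]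
    [MonoidalPreadditive C] [CategoryTheory.MonoidalLinear k C]
    [CategoryTheory.Limits.HasFiniteBiproducts C] [PivotalCat C] [MonoidalKCat k C]
    [PreFusionCat k C] (X : C) :
    IsNondegeneratePairing k (omegaX k X) := by
  obtain ⟨n, S, p, q, hS, hpq, -, -⟩ := PreFusionCat.semisimple (k := k) X
  exact preFusion_nondegenerate_general k X (PivotalCat.dual X) p q hpq fun a =>
    PreFusionCat.nonempty_iso_or_subsingleton_hom k (hS a) MonoidalKCat.unit_free
end

section
/- In a pre-fusion category over a commutative ring k, both the left dimension dim_l(i) and the right dimension dim_r(i) of any simple object i are invertible elements of k. -/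
open CategoryTheory CategoryTheory.Limits MonoidalCategory

universe v u w

/-!
For a simple object `X` with a two-sided dual `Y`, duality identifies both `Hom(𝟙, X ⊗ Y)` and
`Hom(X ⊗ Y, 𝟙)` with `End(X) = k`, so they are free of rank one on the coevaluation and the
evaluation. If `k ≠ 0`, the coevaluation is nonzero, and semisimplicity forces `𝟙` to be a direct
summand of `X ⊗ Y`. The inclusion and projection of this summand are multiples of the coevaluation
and the evaluation, and they compose to the identity, so the composite of the coevaluation with
the evaluation, which is a dimension of `X`, is invertible. The other dimension is obtained by
exchanging `X` and `Y`, as `End(X) ≅ Hom(𝟙, X ⊗ Y) ≅ End(Y)` shows that `Y` is simple too.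
-/

section HomBasis

variable (k : Type w) [CommRing k] {C : Type u} [Category.{v} C] [Preadditive C]
  [CategoryTheory.Linear k C]

/-- The morphism `f : X ⟶ Y` is a basis of the `k`-module `X ⟶ Y`, which is then free of rank one.
For `f = 𝟙 X` this is `IsSimpleObj k X` by definition. -/
def IsHomBasis {X Y : C} (f : X ⟶ Y) : Prop :=
  Function.Bijective fun a : k => a • f

variable {k}

theorem isHomBasis_iff_of_equiv {X Y X' Y' : C} {f : X ⟶ Y} {g : X' ⟶ Y'}
    (Φ : (X ⟶ Y) ≃ (X' ⟶ Y')) (hΦ : ∀ a : k, Φ (a • f) = a • g) :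
    IsHomBasis k f ↔ IsHomBasis k g := by
  have hcomp : (fun a : k => a • g) = Φ ∘ fun a : k => a • f := funext fun a => (hΦ a).symm
  rw [IsHomBasis, IsHomBasis, hcomp, Equiv.comp_bijective]

theorem IsHomBasis.subsingleton_of_eq_zero {X Y : C} {f : X ⟶ Y} (hf : IsHomBasis k f)
    (h : f = 0) : Subsingleton k :=
  ⟨fun a b => hf.injective (by simp only [h, smul_zero])⟩

theorem isIso_comp_of_retract {S X : C} {c : S ⟶ X} {e : X ⟶ S}
    (hc : Function.Surjective fun a : k => a • c) (he : Function.Surjective fun a : k => a • e)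
    (r : Retract S X) : IsIso (c ≫ e) := by
  obtain ⟨s, hs : s • c = r.i⟩ := hc r.i
  obtain ⟨t, ht : t • e = r.r⟩ := he r.r
  have hst : (s * t) • (c ≫ e) = 𝟙 S := by
    rw [← r.retract, ← hs, ← ht, Linear.smul_comp, Linear.comp_smul, smul_smul]
  exact ⟨(s * t) • 𝟙 S, by simpa using hst, by simpa using hst⟩

end HomBasis

section ExactPairing

variable {k : Type w} [CommRing k] {C : Type u} [Category.{v} C] [Preadditive C]
  [CategoryTheory.Linear k C] [MonoidalCategory C] [MonoidalPreadditive C]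
  [CategoryTheory.MonoidalLinear k C] {X Y : C} [ExactPairing X Y]

theorem isHomBasis_coevaluation_iff_left : IsHomBasis k (η_ X Y) ↔ IsSimpleObj k X :=
  isHomBasis_iff_of_equiv
    ((tensorRightHomEquiv (𝟙_ C) X Y X).symm.trans (λ_ X).homFromEquiv) fun a => by
      simp [tensorRightHomEquiv]

theorem isHomBasis_coevaluation_iff_right : IsHomBasis k (η_ X Y) ↔ IsSimpleObj k Y :=
  isHomBasis_iff_of_equiv
    ((tensorLeftHomEquiv (𝟙_ C) X Y Y).symm.trans (ρ_ Y).homFromEquiv) fun a => by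
      simp [tensorLeftHomEquiv]

theorem isHomBasis_evaluation_iff_right : IsHomBasis k (ε_ X Y) ↔ IsSimpleObj k Y :=
  isHomBasis_iff_of_equiv
    ((tensorRightHomEquiv Y X Y (𝟙_ C)).trans (λ_ Y).homToEquiv) fun a => by
      simp [tensorRightHomEquiv]

variable (Y) in
theorem IsSimpleObj.of_exactPairing (hX : IsSimpleObj k X) : IsSimpleObj k Y :=
  isHomBasis_coevaluation_iff_right.mp (isHomBasis_coevaluation_iff_left.mpr hX)

end ExactPairing

section Scalar

variable {k : Type w} [CommRing k] {C : Type u} [Category.{v} C] [Preadditive C]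
  [CategoryTheory.Linear k C] [MonoidalCategory C] [MonoidalPreadditive C]
  [CategoryTheory.MonoidalLinear k C] [MonoidalKCat k C]

variable (k C) in
theorem isSimpleObj_unit : IsSimpleObj k (𝟙_ C) :=
  MonoidalKCat.unit_free

theorem toScalar_smul_id (f : 𝟙_ C ⟶ 𝟙_ C) : toScalar k f • 𝟙 (𝟙_ C) = f :=
  (Equiv.ofBijective _ (isSimpleObj_unit k C)).apply_symm_apply f

theorem isUnit_toScalar (f : 𝟙_ C ⟶ 𝟙_ C) [IsIso f] : IsUnit (toScalar k f) := by
  refine IsUnit.of_mul_eq_one (toScalar k (inv f)) ((isSimpleObj_unit k C).injective ?_)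
  calc (toScalar k f * toScalar k (inv f)) • 𝟙 (𝟙_ C)
      = (toScalar k f • 𝟙 (𝟙_ C)) ≫ (toScalar k (inv f) • 𝟙 (𝟙_ C)) := by
        rw [Linear.smul_comp, Linear.comp_smul, Category.comp_id, smul_smul]
    _ = (1 : k) • 𝟙 (𝟙_ C) := by
        rw [toScalar_smul_id, toScalar_smul_id, IsIso.hom_inv_id, one_smul]

theorem isUnit_toScalar_coevaluation_comp_evaluation {X Y : C} [ExactPairing X Y]
    [ExactPairing Y X] (hX : IsSimpleObj k X)
    (hretract : ∀ f : 𝟙_ C ⟶ X ⊗ Y, f ≠ 0 → Nonempty (Retract (𝟙_ C) (X ⊗ Y))) :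
    IsUnit (toScalar k (η_ X Y ≫ ε_ Y X)) := by
  have hη : IsHomBasis k (η_ X Y) := isHomBasis_coevaluation_iff_left.mpr hX
  have hε : IsHomBasis k (ε_ Y X) := isHomBasis_evaluation_iff_right.mpr hX
  by_cases hzero : η_ X Y = 0
  · have := hη.subsingleton_of_eq_zero hzero
    exact isUnit_of_subsingleton _
  · obtain ⟨r⟩ := hretract _ hzero
    have := isIso_comp_of_retract hη.surjective hε.surjective r
    exact isUnit_toScalar _

end Scalar

namespace PivotalCat

variable {C : Type u} [Category.{v} C] [MonoidalCategory C] [PivotalCat C]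

/-- The left duality of a pivotal category, with `ev_l` and `coev_l`, as an exact pairing. -/
instance exactPairingDualRight (X : C) : ExactPairing X (dual X) where
  coevaluation' := coevl X
  evaluation' := evl X
  coevaluation_evaluation' := by
    have h := left_zigzag₂ X
    rw [Iso.inv_comp_eq] at h
    rw [← cancel_mono (λ_ (dual X)).hom]
    simpa using h
  evaluation_coevaluation' := by
    have h := left_zigzag₁ X
    rw [Iso.inv_comp_eq] at h
    rw [← cancel_mono (ρ_ X).hom]
    simpa using h

/-- The right duality of a pivotal category, with `ev_r` and `coev_r`, as an exact pairing. -/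
instance exactPairingDualLeft (X : C) : ExactPairing (dual X) X where
  coevaluation' := coevr X
  evaluation' := evr X
  coevaluation_evaluation' := by
    have h := right_zigzag₁ X
    rw [Iso.inv_comp_eq] at h
    rw [← cancel_mono (λ_ X).hom]
    simpa using h
  evaluation_coevaluation' := by
    have h := right_zigzag₂ X
    rw [Iso.inv_comp_eq] at h
    rw [← cancel_mono (ρ_ (dual X)).hom]
    simpa using h

theorem diml_eq (X : C) : diml X = η_ (dual X) X ≫ ε_ X (dual X) := by
  rw [diml, trl, whiskerLeft_id, Category.id_comp]
  rfl

theorem dimr_eq (X : C) : dimr X = η_ X (dual X) ≫ ε_ (dual X) X := by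
  rw [dimr, trr, id_whiskerRight, Category.id_comp]
  rfl

end PivotalCat

section PreFusion

variable {k : Type w} [CommRing k] {C : Type u} [Category.{v} C] [Preadditive C]
  [CategoryTheory.Linear k C] [MonoidalCategory C] [MonoidalPreadditive C]
  [CategoryTheory.MonoidalLinear k C] [CategoryTheory.Limits.HasFiniteBiproducts C] [PivotalCat C]
  [MonoidalKCat k C] [PreFusionCat k C]

theorem IsSimpleObj.nonempty_retract_of_ne_zero {S X : C} (hS : IsSimpleObj k S) (f : S ⟶ X)
    (hf : f ≠ 0) : Nonempty (Retract S X) := by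
  obtain ⟨n, obj, p, q, hobj, hsum, hqp, -⟩ := PreFusionCat.semisimple (k := k) X
  have hf_sum : ∑ a, f ≫ p a ≫ q a ≠ 0 := by
    rwa [← Preadditive.comp_sum, hsum, Category.comp_id]
  obtain ⟨a, -, ha⟩ := Finset.exists_ne_zero_of_sum_ne_zero hf_sum
  have hfp : f ≫ p a ≠ 0 := fun h => ha (by rw [← Category.assoc, h, zero_comp])
  have hiso : Nonempty (S ≅ obj a) := by
    by_contra hempty
    exact hfp (PreFusionCat.simple_hom_zero hS (hobj a) (not_nonempty_iff.mp hempty) _)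
  obtain ⟨φ⟩ := hiso
  exact ⟨(Retract.ofIso φ).trans ⟨q a, p a, hqp a⟩⟩

end PreFusion

theorem preFusion_simple_dims_isUnit_general {k : Type w} [CommRing k] {C : Type u}
    [Category.{v} C] [Preadditive C] [CategoryTheory.Linear k C] [MonoidalCategory C]
    [MonoidalPreadditive C] [CategoryTheory.MonoidalLinear k C] [MonoidalKCat k C]
    (hretract : ∀ {Z : C} (f : 𝟙_ C ⟶ Z), f ≠ 0 → Nonempty (Retract (𝟙_ C) Z))
    {X Y : C} [ExactPairing X Y] [ExactPairing Y X] (hX : IsSimpleObj k X) :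
    IsUnit (toScalar k (η_ Y X ≫ ε_ X Y)) ∧ IsUnit (toScalar k (η_ X Y ≫ ε_ Y X)) :=
  ⟨isUnit_toScalar_coevaluation_comp_evaluation (hX.of_exactPairing Y) hretract,
    isUnit_toScalar_coevaluation_comp_evaluation hX hretract⟩

/-- In a pre-fusion category over a commutative ring `k`, the left and right dimensions of
any simple object are invertible elements of `k`. -/
theorem preFusion_simple_dims_isUnit (k : Type w) [CommRing k] (C : Type u)
    [Category.{v} C] [Preadditive C] [CategoryTheory.Linear k C] [MonoidalCategory C]
    [MonoidalPreadditive C] [CategoryTheory.MonoidalLinear k C]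
    [CategoryTheory.Limits.HasFiniteBiproducts C] [PivotalCat C] [MonoidalKCat k C]
    [PreFusionCat k C] {i : C} (hi : IsSimpleObj k i) :
    IsUnit (sdiml k i) ∧ IsUnit (sdimr k i) := by
  rw [sdiml, sdimr, PivotalCat.diml_eq, PivotalCat.dimr_eq]
  exact preFusion_simple_dims_isUnit_general
    (isSimpleObj_unit k C).nonempty_retract_of_ne_zero hi
end

section
/- A pre-fusion category C over a commutative ring k is spherical if and only if dim_l(i) = dim_r(i) for every simple object i of C. -/
open CategoryTheory CategoryTheory.Limits MonoidalCategory

universe v u w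

/-! Both traces are cyclic and additive, so writing `𝟙 X = ∑ a, p a ≫ q a` with every `p a ≫ q a`
factoring through a simple object `S a` gives `tr f = ∑ a, tr (q a ≫ f ≫ p a)` for `tr = tr_l` and
`tr = tr_r`. Each `q a ≫ f ≫ p a` is a scalar multiple of `𝟙 (S a)`, so its two traces are the same
multiple of `dim_l (S a)` and of `dim_r (S a)`. Cyclicity is where pivotality enters: it slides a
morphism around the loop as its dual, which must be the same for both dualities. -/

namespace PivotalCat

section Duality

variable {C : Type u} [Category.{v} C] [MonoidalCategory C] [PivotalCat C]

/-- The left duality of `X`, which in Mathlib's convention exhibits `dual X` as the *right* dual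
of `X`. -/
instance leftDuality (X : C) : ExactPairing X (dual X) where
  coevaluation' := coevl X
  evaluation' := evl X
  coevaluation_evaluation' := by
    rw [← cancel_epi (ρ_ (dual X)).inv, ← cancel_mono (λ_ (dual X)).hom]
    simpa using left_zigzag₂ X
  evaluation_coevaluation' := by
    rw [← cancel_epi (λ_ X).inv, ← cancel_mono (ρ_ X).hom]
    simpa using left_zigzag₁ X

/-- The right duality of `X`, which in Mathlib's convention exhibits `dual X` as the *left* dual
of `X`. -/
instance rightDuality (X : C) : ExactPairing (dual X) X where
  coevaluation' := coevr X
  evaluation' := evr X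
  coevaluation_evaluation' := by
    rw [← cancel_epi (ρ_ X).inv, ← cancel_mono (λ_ X).hom]
    simpa using right_zigzag₁ X
  evaluation_coevaluation' := by
    rw [← cancel_epi (λ_ (dual X)).inv, ← cancel_mono (ρ_ (dual X)).hom]
    simpa using right_zigzag₂ X

/-- The rigid structure underlying a pivotal category, with `dual X` as both duals of `X`. -/
instance rigidCategory : RigidCategory C where
  rightDual X := { rightDual := dual X }
  leftDual X := { leftDual := dual X }

theorem pdual_eq_rightAdjointMate {X Y : C} (f : X ⟶ Y) : pdual f = fᘁ := rfl

theorem pdual_eq_leftAdjointMate {X Y : C} (f : X ⟶ Y) : pdual f = (ᘁf) := ldual_eq_rdual f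

theorem pdual_comp_evl {X Y : C} (f : X ⟶ Y) : pdual f ▷ X ≫ evl X = dual Y ◁ f ≫ evl Y := by
  rw [pdual_eq_rightAdjointMate]
  exact rightAdjointMate_comp_evaluation f

theorem coevl_comp_pdual {X Y : C} (f : X ⟶ Y) :
    coevl Y ≫ Y ◁ pdual f = coevl X ≫ f ▷ dual X := by
  rw [pdual_eq_rightAdjointMate]
  exact coevaluation_comp_rightAdjointMate f

theorem pdual_comp_evr {X Y : C} (f : X ⟶ Y) : X ◁ pdual f ≫ evr X = f ▷ dual Y ≫ evr Y := by
  rw [pdual_eq_leftAdjointMate]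
  exact leftAdjointMate_comp_evaluation f

theorem coevr_comp_pdual {X Y : C} (f : X ⟶ Y) :
    coevr Y ≫ pdual f ▷ Y = coevr X ≫ dual X ◁ f := by
  rw [pdual_eq_leftAdjointMate]
  exact coevaluation_comp_leftAdjointMate f

theorem trl_comp_comm {X Y : C} (f : X ⟶ Y) (g : Y ⟶ X) : trl (f ≫ g) = trl (g ≫ f) :=
  calc trl (f ≫ g)
      = coevr X ≫ dual X ◁ f ≫ dual X ◁ g ≫ evl X := by simp [trl]
    _ = coevr X ≫ dual X ◁ f ≫ pdual g ▷ Y ≫ evl Y := by rw [pdual_comp_evl]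
    _ = coevr X ≫ pdual g ▷ X ≫ dual Y ◁ f ≫ evl Y := by rw [whisker_exchange_assoc]
    _ = coevr Y ≫ dual Y ◁ g ≫ dual Y ◁ f ≫ evl Y := by
      rw [← Category.assoc, coevr_comp_pdual, Category.assoc]
    _ = trl (g ≫ f) := by simp [trl]

theorem trr_comp_comm {X Y : C} (f : X ⟶ Y) (g : Y ⟶ X) : trr (f ≫ g) = trr (g ≫ f) :=
  calc trr (f ≫ g)
      = coevl X ≫ f ▷ dual X ≫ g ▷ dual X ≫ evr X := by simp [trr]
    _ = coevl X ≫ f ▷ dual X ≫ Y ◁ pdual g ≫ evr Y := by rw [pdual_comp_evr]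
    _ = coevl X ≫ X ◁ pdual g ≫ f ▷ dual Y ≫ evr Y := by rw [whisker_exchange_assoc]
    _ = coevl Y ≫ g ▷ dual Y ≫ f ▷ dual Y ≫ evr Y := by
      rw [← Category.assoc, coevl_comp_pdual, Category.assoc]
    _ = trr (g ≫ f) := by simp [trr]

end Duality

section Additivity

variable {C : Type u} [Category.{v} C] [Preadditive C] [MonoidalCategory C]
  [MonoidalPreadditive C] [PivotalCat C] {ι : Type*}

theorem trl_sum {X : C} (s : Finset ι) (f : ι → (X ⟶ X)) :
    trl (∑ a ∈ s, f a) = ∑ a ∈ s, trl (f a) := by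
  simp only [trl, whiskerLeft_sum, Preadditive.sum_comp, Preadditive.comp_sum]

theorem trr_sum {X : C} (s : Finset ι) (f : ι → (X ⟶ X)) :
    trr (∑ a ∈ s, f a) = ∑ a ∈ s, trr (f a) := by
  simp only [trr, sum_whiskerRight, Preadditive.sum_comp, Preadditive.comp_sum]

variable [Fintype ι] {X : C} {S : ι → C} {p : ∀ a, X ⟶ S a} {q : ∀ a, S a ⟶ X}

theorem trl_eq_sum_of_sum_comp_eq_id (hpq : ∑ a, p a ≫ q a = 𝟙 X) (f : X ⟶ X) :
    trl f = ∑ a, trl (q a ≫ f ≫ p a) :=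
  calc trl f
      = trl ((∑ a, p a ≫ q a) ≫ f) := by rw [hpq, Category.id_comp]
    _ = ∑ a, trl (p a ≫ q a ≫ f) := by simp only [Preadditive.sum_comp, Category.assoc, trl_sum]
    _ = ∑ a, trl (q a ≫ f ≫ p a) := by simp only [trl_comp_comm (p _), Category.assoc]

theorem trr_eq_sum_of_sum_comp_eq_id (hpq : ∑ a, p a ≫ q a = 𝟙 X) (f : X ⟶ X) :
    trr f = ∑ a, trr (q a ≫ f ≫ p a) :=
  calc trr f
      = trr ((∑ a, p a ≫ q a) ≫ f) := by rw [hpq, Category.id_comp]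
    _ = ∑ a, trr (p a ≫ q a ≫ f) := by simp only [Preadditive.sum_comp, Category.assoc, trr_sum]
    _ = ∑ a, trr (q a ≫ f ≫ p a) := by simp only [trr_comp_comm (p _), Category.assoc]

theorem trl_eq_trr_of_sum_comp_eq_id (hpq : ∑ a, p a ≫ q a = 𝟙 X)
    (hS : ∀ a (g : S a ⟶ S a), trl g = trr g) (f : X ⟶ X) : trl f = trr f := by
  simp only [trl_eq_sum_of_sum_comp_eq_id hpq, trr_eq_sum_of_sum_comp_eq_id hpq, hS]

end Additivity

section Linearity

variable {k : Type w} [CommRing k] {C : Type u} [Category.{v} C] [Preadditive C]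
  [CategoryTheory.Linear k C] [MonoidalCategory C] [MonoidalPreadditive C]
  [CategoryTheory.MonoidalLinear k C] [PivotalCat C] {X : C}

theorem trl_smul (c : k) (f : X ⟶ X) : trl (c • f) = c • trl f := by
  simp only [trl, MonoidalLinear.whiskerLeft_smul, Linear.smul_comp, Linear.comp_smul]

theorem trr_smul (c : k) (f : X ⟶ X) : trr (c • f) = c • trr f := by
  simp only [trr, MonoidalLinear.smul_whiskerRight, Linear.smul_comp, Linear.comp_smul]

theorem trl_eq_trr_of_surjective_smul_id (hX : Function.Surjective fun c : k => c • 𝟙 X)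
    (hdim : diml X = dimr X) (f : X ⟶ X) : trl f = trr f := by
  obtain ⟨c, rfl⟩ := hX f
  calc trl (c • 𝟙 X)
      = c • diml X := trl_smul c (𝟙 X)
    _ = c • dimr X := by rw [hdim]
    _ = trr (c • 𝟙 X) := (trr_smul c (𝟙 X)).symm

end Linearity

end PivotalCat

/-- `X` is a direct summand of a finite direct sum of simple objects. This is expressed without
forming the sum: the identity of `X` is a finite sum of morphisms that factor through simple
objects. -/
def IsSummandOfSimples (k : Type w) [CommRing k] {C : Type u} [Category.{v} C] [Preadditive C]
    [CategoryTheory.Linear k C] (X : C) : Prop :=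
  ∃ (n : ℕ) (S : Fin n → C) (p : ∀ a, X ⟶ S a) (q : ∀ a, S a ⟶ X),
    (∀ a, IsSimpleObj k (S a)) ∧ ∑ a, p a ≫ q a = 𝟙 X

theorem PreFusionCat.isSummandOfSimples (k : Type w) [CommRing k] {C : Type u} [Category.{v} C]
    [Preadditive C] [CategoryTheory.Linear k C] [MonoidalCategory C] [MonoidalPreadditive C]
    [CategoryTheory.MonoidalLinear k C] [CategoryTheory.Limits.HasFiniteBiproducts C]
    [PivotalCat C] [MonoidalKCat k C] [PreFusionCat k C] (X : C) : IsSummandOfSimples k X := by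
  obtain ⟨n, S, p, q, hS, hpq, -, -⟩ := PreFusionCat.semisimple (k := k) X
  exact ⟨n, S, p, q, hS, hpq⟩

theorem preFusion_spherical_iff_dims_eq_general (k : Type w) [CommRing k] (C : Type u)
    [Category.{v} C] [Preadditive C] [CategoryTheory.Linear k C] [MonoidalCategory C]
    [MonoidalPreadditive C] [CategoryTheory.MonoidalLinear k C] [PivotalCat C]
    (hC : ∀ X : C, IsSummandOfSimples k X) :
    SphericalCat C ↔ ∀ i : C, IsSimpleObj k i → PivotalCat.diml i = PivotalCat.dimr i := by
  refine ⟨fun _ i _ => SphericalCat.tr_eq (𝟙 i), fun hdim => ⟨fun {X} f => ?_⟩⟩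
  obtain ⟨n, S, p, q, hS, hpq⟩ := hC X
  exact PivotalCat.trl_eq_trr_of_sum_comp_eq_id hpq
    (fun a => PivotalCat.trl_eq_trr_of_surjective_smul_id (hS a).surjective (hdim _ (hS a))) f

/-- A pre-fusion category over a commutative ring `k` is spherical if and only if the left
and right dimensions of every simple object coincide. -/
theorem preFusion_spherical_iff_dims_eq (k : Type w) [CommRing k] (C : Type u)
    [Category.{v} C] [Preadditive C] [CategoryTheory.Linear k C] [MonoidalCategory C]
    [MonoidalPreadditive C] [CategoryTheory.MonoidalLinear k C]
    [CategoryTheory.Limits.HasFiniteBiproducts C] [PivotalCat C] [MonoidalKCat k C]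
    [PreFusionCat k C] :
    SphericalCat C ↔ ∀ i : C, IsSimpleObj k i → PivotalCat.diml i = PivotalCat.dimr i := by
  exact preFusion_spherical_iff_dims_eq_general k C (PreFusionCat.isSummandOfSimples k)
end
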